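/- arXiv:1707.09846 — 3 statements merged into one kernel-verified Lean document; each statement's English description precedes it below -/
import Mathlib

section
/- Let b, d, D be integers with 1 ≤ D < d ≤ b, and for i ≥ 1 set e_i := ⌊D·b^i/d⌋ − b·⌊D·b^{i−1}/d⌋ (the digits of the base-b expansion of D/d). Then for every k ≥ 0: e_i = D·(b−d)^{i−1} for all i = 1, …, k if and only if D·(b−d)^k < d. Moreover, if D·(b−d)^k < d, then e_{k+1} = D·(b−d)^k + ⌊D·(b−d)^{k+1}/d⌋. -/
/-! Long division of `D` by `d` in base `b` has remainders `r_k = D * b ^ k % d`, and its digit at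
position `k + 1` is `⌊b * r_k / d⌋ = r_k + ⌊(b - d) * r_k / d⌋`. Since `b ≡ b - d` modulo `d`, the
remainder is `D * (b - d) ^ k` as long as this number stays below `d`, and then the digit equals
the remainder exactly when the next number `D * (b - d) ^ (k + 1)` is still below `d`. -/

/-- The digit at position `k + 1` after the point in the base-`b` expansion of `D / d`, so that the
first digit is `fracDigit b d D 0`. The subtraction never truncates. -/
def fracDigit (b d D k : ℕ) : ℕ :=
  D * b ^ (k + 1) / d - b * (D * b ^ k / d)

theorem mul_div_sub_mul_div_eq_mul_mod_div (b d n : ℕ) :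
    b * n / d - b * (n / d) = b * (n % d) / d := by
  rcases d.eq_zero_or_pos with rfl | hd
  · simp
  have hsplit : b * n = b * (n % d) + d * (b * (n / d)) := by
    conv_lhs => rw [← Nat.mod_add_div n d]
    ring
  rw [hsplit, Nat.add_mul_div_left _ _ hd, Nat.add_sub_cancel]

theorem fracDigit_eq_mul_mod_div (b d D k : ℕ) :
    fracDigit b d D k = b * (D * b ^ k % d) / d := by
  rw [fracDigit, pow_succ', mul_left_comm, mul_div_sub_mul_div_eq_mul_mod_div]

theorem mul_div_eq_add_sub_mul_div {b d : ℕ} (hdb : d ≤ b) (hd : 0 < d) (r : ℕ) :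
    b * r / d = r + (b - d) * r / d := by
  rw [← Nat.mul_add_div hd, ← add_mul, Nat.add_sub_cancel' hdb]

theorem mul_pow_mod_eq_mul_sub_pow_mod {b d : ℕ} (hdb : d ≤ b) (D k : ℕ) :
    D * b ^ k % d = D * (b - d) ^ k % d :=
  have hmod : b ≡ b - d [MOD d] := Nat.mod_eq_sub_mod hdb
  (hmod.pow k).mul_left D

theorem fracDigit_eq_of_mul_sub_pow_lt {b d D k : ℕ} (hdb : d ≤ b) (h : D * (b - d) ^ k < d) :
    fracDigit b d D k = D * (b - d) ^ k + D * (b - d) ^ (k + 1) / d := by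
  rw [fracDigit_eq_mul_mod_div, mul_pow_mod_eq_mul_sub_pow_mod hdb, Nat.mod_eq_of_lt h,
    mul_div_eq_add_sub_mul_div hdb h.pos, pow_succ', mul_left_comm]

theorem fracDigit_eq_mul_sub_pow_iff {b d D k : ℕ} (hdb : d ≤ b) (h : D * (b - d) ^ k < d) :
    fracDigit b d D k = D * (b - d) ^ k ↔ D * (b - d) ^ (k + 1) < d := by
  rw [fracDigit_eq_of_mul_sub_pow_lt hdb h, Nat.add_eq_left, Nat.div_eq_zero_iff_lt h.pos]

theorem mul_pow_lt_of_mul_pow_succ_lt {c d D k : ℕ} (hDd : D < d) (h : D * c ^ (k + 1) < d) :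
    D * c ^ k < d := by
  rcases c.eq_zero_or_pos with rfl | hc
  · exact (mul_le_of_le_one_right D.zero_le (pow_le_one₀ le_rfl zero_le_one)).trans_lt hDd
  · exact (Nat.mul_le_mul_left D (Nat.pow_le_pow_right hc k.le_succ)).trans_lt h

theorem forall_fracDigit_eq_mul_sub_pow_iff {b d D : ℕ} (hDd : D < d) (hdb : d ≤ b) (k : ℕ) :
    (∀ j < k, fracDigit b d D j = D * (b - d) ^ j) ↔ D * (b - d) ^ k < d := by
  induction k with
  | zero => simpa using hDd
  | succ k ih =>
    calc (∀ j < k + 1, fracDigit b d D j = D * (b - d) ^ j)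
      _ ↔ D * (b - d) ^ k < d ∧ fracDigit b d D k = D * (b - d) ^ k := by
        rw [Nat.forall_lt_succ_right, ih]
      _ ↔ D * (b - d) ^ k < d ∧ D * (b - d) ^ (k + 1) < d :=
        and_congr_right (fracDigit_eq_mul_sub_pow_iff hdb)
      _ ↔ D * (b - d) ^ (k + 1) < d :=
        and_iff_right_of_imp (mul_pow_lt_of_mul_pow_succ_lt hDd)

/-- Digits of the base-`b` expansion of `D/d`. -/
theorem stmt15 (b d D : ℕ) (hD1 : 1 ≤ D) (hDd : D < d) (hdb : d ≤ b) (e : ℕ → ℕ)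
    (he : ∀ i, 1 ≤ i → e i = D * b ^ i / d - b * (D * b ^ (i - 1) / d)) :
    ∀ k : ℕ,
      ((∀ i, 1 ≤ i → i ≤ k → e i = D * (b - d) ^ (i - 1)) ↔ D * (b - d) ^ k < d) ∧
      (D * (b - d) ^ k < d →
        e (k + 1) = D * (b - d) ^ k + D * (b - d) ^ (k + 1) / d) := by
  intro k
  have he_succ (j : ℕ) : e (j + 1) = fracDigit b d D j := he (j + 1) j.succ_pos
  have hshift : (∀ i, 1 ≤ i → i ≤ k → e i = D * (b - d) ^ (i - 1)) ↔
      ∀ j < k, fracDigit b d D j = D * (b - d) ^ j := by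
    simp only [← he_succ]
    refine ⟨fun h j hj => h (j + 1) j.succ_pos hj, fun h i hi hik => ?_⟩
    obtain ⟨j, rfl⟩ := Nat.exists_eq_add_of_le' hi
    exact h j hik
  constructor
  · rw [hshift, forall_fracDigit_eq_mul_sub_pow_iff hDd hdb]
  · intro h
    rw [he_succ, fracDigit_eq_of_mul_sub_pow_lt hdb h]
end

section
/- Let b, d, D be integers with 1 ≤ D < d ≤ b. For i ≥ 1 set a_i := ⌊b^i/d⌋ − b·⌊b^{i−1}/d⌋ and e_i := ⌊D·b^i/d⌋ − b·⌊D·b^{i−1}/d⌋, and define the carry digits r_k recursively by r_1 := 0 and r_{k+1} := e_k − D·a_k + b·r_k for k ≥ 1. Then for every k ≥ 1, r_k = ⌊D·b^{k−1}/d⌋ − D·⌊b^{k−1}/d⌋ = ⌊D·(b−d)^{k−1}/d⌋ − D·⌊(b−d)^{k−1}/d⌋. -/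
/-!
Telescoping the definition of the digits shows that `⌊D b ^ (k - 1) / d⌋ - D ⌊b ^ (k - 1) / d⌋`
obeys the recursion of the carry digits, and it vanishes at `k = 1` because `D < d`. It equals
`⌊D s / d⌋`, where `s` is the remainder of `b ^ (k - 1)` modulo `d`, so `b` may be replaced by any
integer congruent to it modulo `d`, in particular by `b - d`.
-/

/-- The carry `⌊D x / d⌋ - D ⌊x / d⌋`: what the fractional parts contribute to the integer part
when `D` copies of `x / d` are added. It is a function on `ℤ`, so that the base may be replaced by
any integer in its residue class. -/
def carry (D d x : ℤ) : ℤ := D * x / d - D * (x / d)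

theorem carry_eq_mul_emod_ediv (D d x : ℤ) : carry D d x = D * (x % d) / d := by
  obtain rfl | hd := eq_or_ne d 0
  · simp [carry]
  · have mul_eq_mul_emod_add : D * x = D * (x % d) + d * (D * (x / d)) := by
      linear_combination -D * Int.emod_add_mul_ediv x d
    rw [carry, mul_eq_mul_emod_add, Int.add_mul_ediv_left _ _ hd, add_sub_cancel_right]

theorem carry_congr {d x y : ℤ} (D : ℤ) (h : x ≡ y [ZMOD d]) :
    carry D d x = carry D d y := by
  rw [carry_eq_mul_emod_ediv, carry_eq_mul_emod_ediv, h.eq]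

theorem carry_one_eq_zero {D d : ℤ} (hD : 0 ≤ D) (hDd : D < d) : carry D d 1 = 0 := by
  obtain rfl | hD' := hD.eq_or_lt
  · simp [carry]
  · have hd : 1 < d := by lia
    rw [carry_eq_mul_emod_ediv, Int.emod_eq_of_lt zero_le_one hd, mul_one,
      Int.ediv_eq_zero_of_lt hD hDd]

theorem carry_eq_digit_sub_mul_digit_add (b D d x y : ℤ) :
    carry D d y =
      (D * y / d - b * (D * x / d)) - D * (y / d - b * (x / d)) + b * carry D d x := by
  unfold carry
  ring

theorem natCast_mul_pow_digit (b c d : ℕ) {i : ℕ} (hi : 1 ≤ i) :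
    ((c * b ^ i / d - b * (c * b ^ (i - 1) / d) : ℕ) : ℤ) =
      (c : ℤ) * b ^ i / d - b * ((c : ℤ) * b ^ (i - 1) / d) := by
  have mul_prev : b * (c * b ^ (i - 1)) = c * b ^ i := by
    rw [mul_left_comm, mul_pow_sub_one (by lia)]
  have no_truncation : b * (c * b ^ (i - 1) / d) ≤ c * b ^ i / d :=
    mul_prev ▸ Nat.mul_div_le_mul_div_assoc b _ d
  rw [Nat.cast_sub no_truncation]
  push_cast
  rfl

theorem stmt16_general (b d D : ℤ) (hD : 0 ≤ D) (hDd : D < d) (a e r : ℕ → ℤ)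
    (ha : ∀ i, 1 ≤ i → a i = b ^ i / d - b * (b ^ (i - 1) / d))
    (he : ∀ i, 1 ≤ i → e i = D * b ^ i / d - b * (D * b ^ (i - 1) / d))
    (hr1 : r 1 = 0)
    (hrk : ∀ k, 1 ≤ k → r (k + 1) = e k - D * a k + b * r k) :
    ∀ k, 1 ≤ k → ∀ c, c ≡ b [ZMOD d] →
      r k = D * c ^ (k - 1) / d - D * (c ^ (k - 1) / d) := by
  intro k hk c hc
  have r_eq_carry : r k = carry D d (b ^ (k - 1)) := by
    induction k, hk using Nat.le_induction with
    | base => simp [hr1, carry_one_eq_zero hD hDd]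
    | succ k hk ih =>
      rw [hrk k hk, ih, he k hk, ha k hk, Nat.add_sub_cancel,
        ← carry_eq_digit_sub_mul_digit_add]
  rw [r_eq_carry, ← carry_congr D (hc.pow (k - 1)), carry]

/-- Closed formula for the carry digits of the `D`-fold sum `1/d + ⋯ + 1/d = D/d`
in base `b`. -/
theorem stmt16 (b d D : ℕ) (hD1 : 1 ≤ D) (hDd : D < d) (hdb : d ≤ b)
    (a e : ℕ → ℕ) (r : ℕ → ℤ)
    (ha : ∀ i, 1 ≤ i → a i = b ^ i / d - b * (b ^ (i - 1) / d))
    (he : ∀ i, 1 ≤ i → e i = D * b ^ i / d - b * (D * b ^ (i - 1) / d))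
    (hr1 : r 1 = 0)
    (hrk : ∀ k, 1 ≤ k → r (k + 1) = (e k : ℤ) - (D : ℤ) * (a k : ℤ) + (b : ℤ) * r k) :
    ∀ k, 1 ≤ k →
      r k = ((D * b ^ (k - 1) / d : ℕ) : ℤ) - (D : ℤ) * ((b ^ (k - 1) / d : ℕ) : ℤ) ∧
      r k = ((D * (b - d) ^ (k - 1) / d : ℕ) : ℤ) -
        (D : ℤ) * (((b - d) ^ (k - 1) / d : ℕ) : ℤ) := by
  have carry_formula := stmt16_general b d D (Int.natCast_nonneg D) (mod_cast hDd)
    (fun i ↦ a i) (fun i ↦ e i) r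
    (fun i hi ↦ by simpa [ha i hi] using natCast_mul_pow_digit b 1 d hi)
    (fun i hi ↦ by simpa only [he i hi] using natCast_mul_pow_digit b D d hi)
    hr1 hrk
  intro k hk
  have hmod : ((b - d : ℕ) : ℤ) ≡ b [ZMOD d] := by simp [Int.ModEq, Nat.cast_sub hdb]
  exact ⟨mod_cast carry_formula k hk b rfl, mod_cast carry_formula k hk (b - d : ℕ) hmod⟩
end

section
/- Let b, d, D be integers with 1 ≤ D ≤ d ≤ b − 2, β := b − D, and b > 6. Then c_{b,β}(1/d) ≥ (β + 1)/(β·(β − 1)). -/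
/-- The `i`-th base-`b` digit (for `i : ℤ`) of a real number `x ≥ 0`:
`⌊x·b^{−i}⌋ mod b`. -/
noncomputable def bDigit (b : ℕ) (x : ℝ) (i : ℤ) : ℤ :=
  ⌊x * (b : ℝ) ^ (-i)⌋ % b

/-- The `(b,β)`-content of a real number `x ≥ 0`: read the base-`b` digits of `x`
in base `β`. -/
noncomputable def content (b β : ℕ) (x : ℝ) : ℝ :=
  ∑' i : ℤ, (bDigit b x i : ℝ) * (β : ℝ) ^ i

/-!
Write `c` for `content b β`. Shifting digits gives `c (b * x) = β * c x`, and splitting them at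
position `0` gives `c x = c ⌊x⌋ + c (fract x)`, so for `0 ≤ x < 1` the content obeys
`β * c x = ⌊b * x⌋ + c (fract (b * x))`.

The bound `(β + 1) / (β * (β - 1))` is the value of `0.1222…` in base `β`, and `2 / (β - 1)`, that
of `0.222…`, is the fixed point of `t ↦ (2 + t) / β`. If `1 < d`, then the expansion of `1 / d`
starts with a digit `≥ 2`, with `1` and a digit `≥ 3`, or with `1, 2` and a digit `≥ 4`. Read in
base `β`, each of these reaches `0.1222…`: the first two if `β ≥ 3`, the last one already if
`β ≥ 2`. If `β = 2`, then `d = b - 2`, and `b > 6` forces the digits `1, 2`.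
-/

section Digits

variable {b : ℕ} {x : ℝ} {i : ℤ}

lemma bDigit_nonneg (hb : 0 < b) : 0 ≤ bDigit b x i :=
  Int.emod_nonneg _ (by omega)

lemma bDigit_lt (hb : 0 < b) : bDigit b x i < b :=
  Int.emod_lt_of_pos _ (by omega)

lemma bDigit_mul_zpow (hb : 0 < b) (x : ℝ) (n i : ℤ) :
    bDigit b (x * (b : ℝ) ^ n) i = bDigit b x (i - n) := by
  have hb0 : (b : ℝ) ≠ 0 := by positivity
  rw [bDigit, bDigit, mul_assoc, ← zpow_add₀ hb0, neg_sub, sub_eq_add_neg]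

lemma bDigit_eq_zero_of_lt_zpow (hx : 0 ≤ x) (hxi : x < (b : ℝ) ^ i) : bDigit b x i = 0 := by
  have hfloor : ⌊x * (b : ℝ) ^ (-i)⌋ = 0 := by
    rw [Int.floor_eq_zero_iff, zpow_neg, ← div_eq_mul_inv]
    exact ⟨by positivity, (div_lt_one (hx.trans_lt hxi)).2 hxi⟩
  rw [bDigit, hfloor, Int.zero_emod]

lemma bDigit_intCast_of_neg (m : ℤ) (hi : i < 0) : bDigit b m i = 0 := by
  obtain ⟨k, rfl⟩ : ∃ k : ℕ, i = -(k + 1 : ℕ) := ⟨(-i - 1).toNat, by omega⟩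
  have hint : (m : ℝ) * (b : ℝ) ^ (-(-((k + 1 : ℕ) : ℤ))) = (m * b ^ k * b : ℤ) := by
    rw [neg_neg, zpow_natCast]
    push_cast
    ring
  rw [bDigit, hint, Int.floor_intCast, Int.mul_emod_left]

lemma bDigit_eq_bDigit_floor_add_bDigit_fract (hb : 0 < b) (x : ℝ) (i : ℤ) :
    bDigit b x i = bDigit b ⌊x⌋ i + bDigit b (Int.fract x) i := by
  rcases lt_or_ge i 0 with hi | hi
  · obtain ⟨k, rfl⟩ : ∃ k : ℕ, i = -(k + 1 : ℕ) := ⟨(-i - 1).toNat, by omega⟩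
    have hsplit : x * (b : ℝ) ^ (-(-((k + 1 : ℕ) : ℤ))) =
        Int.fract x * (b : ℝ) ^ (-(-((k + 1 : ℕ) : ℤ))) + (⌊x⌋ * b ^ k * b : ℤ) := by
      rw [neg_neg, zpow_natCast, Int.fract]
      push_cast
      ring
    rw [bDigit_intCast_of_neg _ hi, zero_add, bDigit, bDigit, hsplit, Int.floor_add_intCast,
      Int.add_mul_emod_self_right]
  · lift i to ℕ using hi
    have hfract : bDigit b (Int.fract x) i = 0 := by
      refine bDigit_eq_zero_of_lt_zpow (Int.fract_nonneg x) ((Int.fract_lt_one x).trans_le ?_)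
      exact one_le_zpow₀ (mod_cast hb) (by positivity)
    have hfloor (y : ℝ) : ⌊y * (b : ℝ) ^ (-(i : ℤ))⌋ = ⌊y⌋ / (b ^ i : ℕ) := by
      rw [← Int.floor_div_natCast, zpow_neg, zpow_natCast, Nat.cast_pow, div_eq_mul_inv]
    rw [hfract, add_zero, bDigit, bDigit, hfloor, hfloor, Int.floor_intCast]

end Digits

section Content

variable {b β : ℕ} {x : ℝ}

lemma summable_bDigit_mul_zpow (hb : 1 < b) (hβ : 1 < β) (hx : 0 ≤ x) :
    Summable fun i : ℤ ↦ (bDigit b x i : ℝ) * (β : ℝ) ^ i := by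
  have hb1 : (1 : ℝ) < b := mod_cast hb
  refine .of_nat_of_neg_add_one ?_ ?_
  · obtain ⟨N, hN⟩ := pow_unbounded_of_one_lt x hb1
    refine summable_of_ne_finset_zero (s := Finset.range N) fun n hn ↦ ?_
    have hxn : x < (b : ℝ) ^ (n : ℤ) := by
      rw [zpow_natCast]
      exact hN.trans_le (pow_le_pow_right₀ hb1.le (by simpa using hn))
    rw [bDigit_eq_zero_of_lt_zpow hx hxn, Int.cast_zero, zero_mul]
  · have hgeom : Summable fun n : ℕ ↦ (b : ℝ) * (β : ℝ)⁻¹ ^ (n + 1) :=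
      ((summable_nat_add_iff 1).2 (summable_geometric_of_lt_one (by positivity)
        (inv_lt_one_of_one_lt₀ (mod_cast hβ)))).mul_left _
    refine .of_nonneg_of_le (fun n ↦ ?_) (fun n ↦ ?_) hgeom
    · exact mul_nonneg (mod_cast bDigit_nonneg (by omega)) (by positivity)
    · have hpow : (β : ℝ) ^ (-((n : ℤ) + 1)) = (β : ℝ)⁻¹ ^ (n + 1) := by
        rw [← inv_zpow']
        norm_cast
      rw [hpow]
      gcongr
      exact_mod_cast (bDigit_lt (by omega)).le

lemma content_nonneg (hb : 0 < b) : 0 ≤ content b β x :=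
  tsum_nonneg fun _ ↦ mul_nonneg (mod_cast bDigit_nonneg hb) (by positivity)

lemma content_mul_zpow (hb : 0 < b) (hβ : 0 < β) (x : ℝ) (n : ℤ) :
    content b β (x * (b : ℝ) ^ n) = (β : ℝ) ^ n * content b β x := by
  have hβ0 : (β : ℝ) ≠ 0 := by positivity
  rw [content, content, ← tsum_mul_left, ← (Equiv.addRight n).tsum_eq]
  refine tsum_congr fun i ↦ ?_
  rw [Equiv.coe_addRight, bDigit_mul_zpow hb, add_sub_cancel_right, zpow_add₀ hβ0]
  ring

lemma content_intCast {m : ℤ} (hm : 0 ≤ m) (hmb : m < b) : content b β m = m := by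
  rw [content, tsum_eq_single 0]
  · simp [bDigit, Int.emod_eq_of_lt hm hmb]
  · intro i hi
    suffices bDigit b m i = 0 by rw [this, Int.cast_zero, zero_mul]
    rcases hi.lt_or_gt with hneg | hpos
    · exact bDigit_intCast_of_neg m hneg
    · have hb1 : (1 : ℝ) ≤ b := mod_cast (by omega : 1 ≤ b)
      refine bDigit_eq_zero_of_lt_zpow (mod_cast hm) ?_
      calc (m : ℝ) < b := mod_cast hmb
        _ = (b : ℝ) ^ (1 : ℤ) := (zpow_one _).symm
        _ ≤ (b : ℝ) ^ i := zpow_le_zpow_right₀ hb1 hpos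

lemma content_eq_content_floor_add_content_fract (hb : 1 < b) (hβ : 1 < β) (hx : 0 ≤ x) :
    content b β x = content b β ⌊x⌋ + content b β (Int.fract x) := by
  have hfloor : (0 : ℝ) ≤ ⌊x⌋ := mod_cast Int.floor_nonneg.2 hx
  rw [content, content, content, ← (summable_bDigit_mul_zpow hb hβ hfloor).tsum_add
    (summable_bDigit_mul_zpow hb hβ (Int.fract_nonneg x))]
  refine tsum_congr fun i ↦ ?_
  rw [bDigit_eq_bDigit_floor_add_bDigit_fract (by omega) x i, Int.cast_add, add_mul]

lemma content_eq_floor_add_content_fract (hb : 1 < b) (hβ : 1 < β) (hx : 0 ≤ x) (hxb : x < b) :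
    content b β x = ⌊x⌋ + content b β (Int.fract x) := by
  rw [content_eq_content_floor_add_content_fract hb hβ hx,
    content_intCast (Int.floor_nonneg.2 hx) (Int.floor_lt.2 (mod_cast hxb))]

lemma floor_le_content (hb : 1 < b) (hβ : 1 < β) (hx : 0 ≤ x) (hxb : x < b) :
    ⌊x⌋ ≤ content b β x := by
  rw [content_eq_floor_add_content_fract hb hβ hx hxb]
  exact le_add_of_nonneg_right (content_nonneg (by omega))

lemma one_le_content (hb : 1 < b) (hβ : 1 < β) (hx : 1 ≤ x) : 1 ≤ content b β x := by
  have : (0 : ℝ) < b := by positivity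
  obtain ⟨n, hn, hn'⟩ := exists_nat_pow_near hx (mod_cast hb : (1 : ℝ) < b)
  set y := x / (b : ℝ) ^ n
  have hy : 1 ≤ y := (one_le_div (by positivity)).2 hn
  have hyb : y < b := by rwa [div_lt_iff₀ (by positivity), ← pow_succ']
  have hxy : x = y * (b : ℝ) ^ (n : ℤ) := by
    rw [zpow_natCast, div_mul_cancel₀ _ (by positivity)]
  have hcontent : 1 ≤ content b β y := calc
    (1 : ℝ) ≤ ⌊y⌋ := mod_cast Int.le_floor.2 (mod_cast hy)
    _ ≤ content b β y := floor_le_content hb hβ (by linarith) hyb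
  rw [hxy, content_mul_zpow (by omega) (by omega), zpow_natCast]
  exact one_le_mul_of_one_le_of_one_le (one_le_pow₀ (mod_cast hβ.le)) hcontent

lemma mul_content_eq_content_mul (hb : 0 < b) (hβ : 0 < β) (x : ℝ) :
    β * content b β x = content b β (b * x) := by
  simpa only [zpow_one, mul_comm x] using (content_mul_zpow hb hβ x 1).symm

lemma mul_content_eq_floor_add_content_fract (hb : 1 < b) (hβ : 1 < β) (hx : 0 ≤ x) (hx1 : x < 1) :
    β * content b β x = ⌊b * x⌋ + content b β (Int.fract (b * x)) := by
  rw [mul_content_eq_content_mul (by omega) (by omega),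
    content_eq_floor_add_content_fract hb hβ (by positivity)]
  exact mul_lt_of_lt_one_right (by positivity) hx1

lemma floor_le_mul_content (hb : 1 < b) (hβ : 1 < β) (hx : 0 ≤ x) (hx1 : x < 1) :
    ⌊b * x⌋ ≤ β * content b β x := by
  rw [mul_content_eq_floor_add_content_fract hb hβ hx hx1]
  exact le_add_of_nonneg_right (content_nonneg (by omega))

end Content

section LowerBound

lemma two_div_sub_one_le_one {t : ℝ} (ht : 3 ≤ t) : 2 / (t - 1) ≤ 1 :=
  (div_le_one (by linarith)).2 (by linarith)

lemma two_div_sub_one_le_of_two_add_le {t c : ℝ} (ht : 1 < t) (hc : 2 + 2 / (t - 1) ≤ t * c) :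
    2 / (t - 1) ≤ c := by
  have ht1 : t - 1 ≠ 0 := by linarith
  have hfixed : t * (2 / (t - 1)) = 2 + 2 / (t - 1) := by
    field_simp
    ring
  exact le_of_mul_le_mul_left (hfixed.trans_le hc) (by linarith)

variable {b β : ℕ} {x : ℝ}

lemma two_div_sub_one_le_content (hβ : 1 < β) (hx0 : 0 ≤ x) (hx1 : x < 1)
    (hx : 2 ≤ (b - 2) * x) (h : 3 ≤ β ∨ b * x < 3) : 2 / ((β : ℝ) - 1) ≤ content b β x := by
  have hb : 1 < b := by
    have : (1 : ℝ) < b := by nlinarith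
    exact_mod_cast this
  have hβ2 : (2 : ℝ) ≤ β := mod_cast hβ
  have hβ1 : (1 : ℝ) < β := by linarith
  refine two_div_sub_one_le_of_two_add_le hβ1 ?_
  rcases lt_or_ge (b * x) 3 with hlt | hge
  · have hfloor : ⌊b * x⌋ = 2 := Int.floor_eq_iff.2 ⟨by push_cast; linarith, by push_cast; linarith⟩
    have hfract : Int.fract (b * x) = b * x - 2 := by rw [Int.fract, hfloor, Int.cast_ofNat]
    rw [mul_content_eq_floor_add_content_fract hb hβ hx0 hx1, hfloor, Int.cast_ofNat]
    gcongr
    refine two_div_sub_one_le_of_two_add_le hβ1 ?_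
    have hfour : 4 ≤ b * Int.fract (b * x) := by rw [hfract]; nlinarith
    calc 2 + 2 / ((β : ℝ) - 1) ≤ 2 + 2 := by gcongr; exact div_le_self zero_le_two (by linarith)
      _ = ((4 : ℤ) : ℝ) := by norm_num
      _ ≤ ⌊b * Int.fract (b * x)⌋ := mod_cast Int.le_floor.2 (mod_cast hfour)
      _ ≤ β * content b β (Int.fract (b * x)) :=
        floor_le_mul_content hb hβ (Int.fract_nonneg _) (Int.fract_lt_one _)
  · have hβ3 : (3 : ℝ) ≤ β := mod_cast h.resolve_right hge.not_gt
    calc 2 + 2 / ((β : ℝ) - 1) ≤ 2 + 1 := by gcongr; exact two_div_sub_one_le_one hβ3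
      _ = ((3 : ℤ) : ℝ) := by norm_num
      _ ≤ ⌊b * x⌋ := mod_cast Int.le_floor.2 (mod_cast hge)
      _ ≤ β * content b β x := floor_le_mul_content hb hβ hx0 hx1

lemma one_add_two_div_sub_one_le_mul_content (hβ : 1 < β) (hx0 : 0 ≤ x) (hx1 : x < 1)
    (hx : 1 ≤ (b - 2) * x) (h : 3 ≤ β ∨ b * (b * x - 1) < 3) :
    1 + 2 / ((β : ℝ) - 1) ≤ β * content b β x := by
  have hb3 : (3 : ℝ) < b := by nlinarith
  have hb : 1 < b := by
    have : (1 : ℝ) < b := by linarith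
    exact_mod_cast this
  rcases lt_or_ge (b * x) 2 with hlt | hge
  · have hfloor : ⌊b * x⌋ = 1 := Int.floor_eq_iff.2 ⟨by push_cast; linarith, by push_cast; linarith⟩
    have hfract : Int.fract (b * x) = b * x - 1 := by rw [Int.fract, hfloor, Int.cast_one]
    rw [mul_content_eq_floor_add_content_fract hb hβ hx0 hx1, hfloor, hfract, Int.cast_one]
    gcongr
    exact two_div_sub_one_le_content hβ (by linarith) (by linarith) (by nlinarith) h
  · have hβ3 : (3 : ℝ) ≤ β := mod_cast h.resolve_right (by nlinarith)
    calc 1 + 2 / ((β : ℝ) - 1) ≤ 1 + 1 := by gcongr; exact two_div_sub_one_le_one hβ3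
      _ = ((2 : ℤ) : ℝ) := by norm_num
      _ ≤ ⌊b * x⌋ := mod_cast Int.le_floor.2 (mod_cast hge)
      _ ≤ β * content b β x := floor_le_mul_content hb hβ hx0 hx1

end LowerBound

theorem stmt17_general (b β : ℕ) (d : ℝ) (hd : 0 < d) (hdb : d + 2 ≤ b) (hbd : b ≤ d + β)
    (h : 3 ≤ β ∨ 6 < b) :
    ((β : ℝ) + 1) / (β * (β - 1)) ≤ content b β (1 / d) := by
  have hβ2 : (2 : ℝ) ≤ β := by linarith
  have hβ : 1 < β := mod_cast hβ2
  have hb : 1 < b := mod_cast (by linarith : (1 : ℝ) < b)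
  have hsmall : 3 ≤ β ∨ b * (b * (1 / d) - 1) < 3 := by
    refine or_iff_not_imp_left.2 fun hβ3 ↦ ?_
    obtain rfl : β = 2 := by omega
    have hb7 : (7 : ℝ) ≤ b := mod_cast h.resolve_left hβ3
    obtain rfl : d = b - 2 := by push_cast at hbd; linarith
    calc (b : ℝ) * (b * (1 / (b - 2)) - 1) = 2 * b / (b - 2) := by field_simp; ring
      _ < 3 := by rw [div_lt_iff₀ hd]; linarith
  suffices 1 + 2 / ((β : ℝ) - 1) ≤ β * content b β (1 / d) by
    have hβ1 : (β : ℝ) - 1 ≠ 0 := by linarith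
    calc ((β : ℝ) + 1) / (β * (β - 1)) = (1 + 2 / (β - 1)) / β := by field_simp; ring
      _ ≤ content b β (1 / d) := by rwa [div_le_iff₀' (by linarith)]
  rcases lt_or_ge (1 / d) 1 with hlt | hge
  · refine one_add_two_div_sub_one_le_mul_content hβ (by positivity) hlt ?_ hsmall
    rw [mul_one_div, one_le_div hd]
    linarith
  · have hb3 : (3 : ℝ) ≤ b := mod_cast (by linarith : (2 : ℝ) < b)
    have hbd1 : (b : ℝ) ≤ b * (1 / d) := le_mul_of_one_le_right (by linarith) hge
    have hβ3 : (3 : ℝ) ≤ β := mod_cast hsmall.resolve_right (by nlinarith)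
    calc 1 + 2 / ((β : ℝ) - 1) ≤ 1 + 1 := by gcongr; exact two_div_sub_one_le_one hβ3
      _ ≤ β * 1 := by linarith
      _ ≤ β * content b β (1 / d) := by gcongr; exact one_le_content hb hβ hge

/-- Lower bound on the `(b, b−D)`-content of `1/d`. -/
theorem stmt17 (b d D : ℕ) (hD1 : 1 ≤ D) (hDd : D ≤ d) (hdb : d ≤ b - 2) (hb : 6 < b) :
    (((b - D : ℕ) : ℝ) + 1) / (((b - D : ℕ) : ℝ) * (((b - D : ℕ) : ℝ) - 1)) ≤
      content b (b - D) (1 / (d : ℝ)) :=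
  stmt17_general b (b - D) d (mod_cast hD1.trans hDd) (mod_cast (by omega)) (mod_cast (by omega))
    (.inr hb)
end
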